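/- Let S = {s_1,…,s_K} (K ≥ 5) be a protocol sequence set in which all sequences have the same duty factor f = n/d with n, d positive integers, gcd(n, d) = 1 and 0 < f < 1. Suppose S is TI with MPR capability γ = K−3 and R_i > 0 for every user i. If (i) K−3 is a prime number, (ii) K−2 is even, and (iii) gcd((K−2)/2, d) = 1, then S is SI. -/

import Mathlib

open Finset

/-- Generalized Hamming cross-correlation of the sequences indexed by `A`
(only the shifts `τ j` with `j ∈ A` matter). -/
def Hcorr {K L : ℕ} [NeZero L] (s : Fin K → ZMod L → ℕ)
    (A : Finset (Fin K)) (τ : Fin K → ZMod L) : ℕ :=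
  ∑ t : ZMod L, ∏ j ∈ A, s j (t + τ j)

/-- The family `s` is shift-invariant (SI): every generalized Hamming
cross-correlation is independent of the relative shifts. -/
def IsSI {K L : ℕ} [NeZero L] (s : Fin K → ZMod L → ℕ) : Prop :=
  ∀ A : Finset (Fin K), A.Nonempty →
    ∀ τ τ' : Fin K → ZMod L, Hcorr s A τ = Hcorr s A τ'

/-- Number of slots `t` in one period where user `i` transmits and at most
`γ - 1` other users transmit. -/
def Rcount {K L : ℕ} [NeZero L] (s : Fin K → ZMod L → ℕ) (γ : ℕ)
    (i : Fin K) (τ : Fin K → ZMod L) : ℕ :=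
  (Finset.univ.filter (fun t : ZMod L =>
    s i (t + τ i) = 1 ∧ ∑ j ∈ Finset.univ.erase i, s j (t + τ j) ≤ γ - 1)).card

/-- Throughput of user `i` under MPR capability `γ` at shifts `τ`. -/
def R {K L : ℕ} [NeZero L] (s : Fin K → ZMod L → ℕ) (γ : ℕ)
    (i : Fin K) (τ : Fin K → ZMod L) : ℚ :=
  (Rcount s γ i τ : ℚ) / L

/-- The family `s` is throughput-invariant (TI) with MPR capability `γ`. -/
def IsTI {K L : ℕ} [NeZero L] (s : Fin K → ZMod L → ℕ) (γ : ℕ) : Prop :=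
  ∀ i : Fin K, ∀ τ τ' : Fin K → ZMod L, R s γ i τ = R s γ i τ'

/-- Duty factor of a single sequence. -/
def duty {L : ℕ} [NeZero L] (s : ZMod L → ℕ) : ℚ :=
  (∑ t : ZMod L, (s t : ℚ)) / L

/-!
Centre the sequences, `u j = s j - f j`, where `f j` is the duty factor. The throughput of user `i`
is multi-affine in the sequences, so it equals `∑ A, c i A * U A τ`, where `U A` is the
cross-correlation of the `u j` with `j ∈ A`. Since every `u j` has mean zero, this is the Hoeffding
decomposition of the throughput as a function of the shifts; if the throughput is constant, then
`c i A * U A = 0` for every nonempty `A`. It remains to find, for each `A` with at least two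
elements, a user `i` with `c i A ≠ 0`: then all `U A` vanish, and expanding `s j = f j + u j` in
`Hcorr` gives shift invariance.

Generating functions yield `c i A`. With `a = |A|` and `k = γ - 1` it is, up to a nonzero factor,
the coefficient of `X ^ k` in `(X - 1) ^ (a - 2) * ∏ j ∉ A, (1 - f j + f j X)` if `i ∈ A`, and in
`(X - 1) ^ (a - 1) * ∏ j ∉ A ∪ {i}, (1 - f j + f j X)` if `i ∉ A`. For `i ∈ A` and `l ∉ A` these
two polynomials are `(1 - f l + f l X) * q` and `(X - 1) * q` with the same `q`, so if both
coefficients vanished, `q` would have two consecutive zero coefficients. This is impossible for a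
real-rooted polynomial with nonzero constant term, by Rolle's theorem and Laguerre's inequality.
-/

open Polynomial

section RealRooted

theorem splits_derivative {p : ℝ[X]} (hp : p.Splits) : (derivative p).Splits := by
  rw [splits_iff_card_roots] at hp ⊢
  refine le_antisymm (card_roots' _) ?_
  have hrolle := card_roots_le_derivative p
  have hdeg := natDegree_derivative_le p
  omega

theorem two_mul_coeff_zero_mul_coeff_two_le_sq_coeff_one {𝕜 : Type*} [CommRing 𝕜] [LinearOrder 𝕜]
    [IsStrictOrderedRing 𝕜] {p : 𝕜[X]} (hp : p.Splits) :
    2 * p.coeff 0 * p.coeff 2 ≤ p.coeff 1 ^ 2 := by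
  induction hp using Submonoid.closure_induction_left with
  | one => simp [coeff_one]
  | mul_left q hq p _ ih =>
    rcases hq with ⟨a, rfl⟩ | ⟨a, rfl⟩
    · simp only [coeff_C_mul]
      nlinarith [mul_le_mul_of_nonneg_left ih (sq_nonneg a)]
    · simp only [add_mul, coeff_add, coeff_C_mul, coeff_X_mul_zero, coeff_X_mul]
      nlinarith [mul_le_mul_of_nonneg_left ih (sq_nonneg a), sq_nonneg (p.coeff 0)]

theorem coeff_zero_eq_zero_of_coeff_one_of_coeff_two {𝕜 : Type*} [Field 𝕜] [LinearOrder 𝕜]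
    [IsStrictOrderedRing 𝕜] {p : 𝕜[X]} (hp : p.Splits)
    (hdeg : p.natDegree ≠ 0) (h₁ : p.coeff 1 = 0) (h₂ : p.coeff 2 = 0) : p.coeff 0 = 0 := by
  obtain ⟨r, hr⟩ := hp.exists_eval_eq_zero fun h ↦ hdeg (natDegree_eq_of_degree_eq_some h)
  obtain ⟨q, rfl⟩ := dvd_iff_isRoot.2 hr
  have hq : q.Splits := by
    refine hp.of_dvd ?_ (dvd_mul_left q _)
    intro h
    simp [h] at hdeg
  have hlaguerre := two_mul_coeff_zero_mul_coeff_two_le_sq_coeff_one hq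
  simp only [sub_mul, coeff_sub, coeff_C_mul, coeff_X_mul_zero, coeff_X_mul] at h₁ h₂ ⊢
  have hsum : q.coeff 0 ^ 2 + r ^ 2 * (q.coeff 1 ^ 2 - 2 * q.coeff 0 * q.coeff 2) = 0 := by
    linear_combination (q.coeff 0 - r * q.coeff 1) * h₁ + 2 * r * q.coeff 0 * h₂
  have hq₀ : q.coeff 0 = 0 := pow_eq_zero_iff two_ne_zero |>.1 <|
    ((add_eq_zero_iff_of_nonneg (sq_nonneg _)
      (mul_nonneg (sq_nonneg r) (sub_nonneg.2 hlaguerre))).1 hsum).1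
  simp [hq₀]

theorem coeff_eq_zero_of_consecutive_coeff_eq_zero {p : ℝ[X]} (hp : p.Splits) {m : ℕ}
    (hdeg : m ≤ p.natDegree) (hm : p.coeff m = 0) (hm' : p.coeff (m + 1) = 0) :
    ∀ l ≤ m, p.coeff l = 0 := by
  induction m generalizing p with
  | zero => simpa using hm
  | succ m ih =>
    have hderiv : ∀ l ≤ m, p.coeff (l + 1) = 0 := by
      intro l hl
      have hl' := ih (splits_derivative hp) (by rw [natDegree_derivative]; omega)
        (by simp [coeff_derivative, hm]) (by simp [coeff_derivative, hm']) l hl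
      rw [coeff_derivative] at hl'
      exact (mul_eq_zero.1 hl').resolve_right (by positivity)
    have htwo : p.coeff 2 = 0 := by
      rcases m with _ | m
      · exact hm'
      · exact hderiv 1 (by omega)
    rintro (_ | l) hl
    · exact coeff_zero_eq_zero_of_coeff_one_of_coeff_two hp (by omega) (hderiv 0 m.zero_le) htwo
    · exact hderiv l (by omega)

end RealRooted

section CrossCorrelation

variable {ι G 𝕜 : Type*} [Fintype G]

/-- The cross-correlation, at relative shifts `τ`, of the functions `u j` with `j ∈ A`. It is
`Hcorr` with values in an arbitrary semiring, so that it also applies to centred sequences. -/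
def crossCorr [Add G] [CommSemiring 𝕜] (u : ι → G → 𝕜) (A : Finset ι) (τ : ι → G) : 𝕜 :=
  ∑ t, ∏ j ∈ A, u j (t + τ j)

theorem crossCorr_eq_of_centered [Add G] [CommRing 𝕜] {x : ι → G → 𝕜} {f : ι → 𝕜}
    (h : ∀ A : Finset ι, A.Nonempty → ∀ τ, crossCorr (fun j t ↦ x j t - f j) A τ = 0)
    (A : Finset ι) (τ : ι → G) :
    crossCorr x A τ = Fintype.card G * ∏ j ∈ A, f j := by
  classical
  have hexpand (t : G) : ∏ j ∈ A, x j (t + τ j) =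
      ∑ B ∈ A.powerset, (∏ j ∈ B, (x j (t + τ j) - f j)) * ∏ j ∈ A \ B, f j := by
    rw [← prod_add]
    exact prod_congr rfl fun j _ ↦ (sub_add_cancel _ _).symm
  calc crossCorr x A τ
      = ∑ B ∈ A.powerset, crossCorr (fun j t ↦ x j t - f j) B τ * ∏ j ∈ A \ B, f j := by
        simp only [crossCorr, hexpand, sum_mul]
        exact sum_comm
    _ = crossCorr (fun j t ↦ x j t - f j) ∅ τ * ∏ j ∈ A \ ∅, f j := by
        refine sum_eq_single_of_mem ∅ (empty_mem_powerset A) fun B _ hB ↦ ?_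
        rw [h B (nonempty_iff_ne_empty.2 hB), zero_mul]
    _ = Fintype.card G * ∏ j ∈ A, f j := by simp [crossCorr]

variable [Field 𝕜] [DecidableEq ι] [DecidableEq G]

variable (𝕜) in
/-- Signed weights on the shifts of user `j`: evaluation at `τ j` minus the mean for `j ∈ A`, and
the mean for `j ∉ A`. Integrating against their product over `j` extracts from a function of
the shifts the component of its Hoeffding (ANOVA) decomposition indexed by `A`. -/
def hoeffdingWeight (A : Finset ι) (τ : ι → G) (j : ι) (v : G) : 𝕜 :=
  if j ∈ A then Pi.single (M := fun _ ↦ 𝕜) (τ j) 1 v - (Fintype.card G : 𝕜)⁻¹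
  else (Fintype.card G : 𝕜)⁻¹

theorem sum_hoeffdingWeight [Nonempty G] [CharZero 𝕜] (A : Finset ι) (τ : ι → G) (j : ι) :
    ∑ v, hoeffdingWeight 𝕜 A τ j v = if j ∈ A then 0 else 1 := by
  have hcard : (Fintype.card G : 𝕜) ≠ 0 := Nat.cast_ne_zero.2 Fintype.card_ne_zero
  unfold hoeffdingWeight
  split_ifs <;> simp [hcard]

theorem sum_hoeffdingWeight_mul (A : Finset ι) (τ : ι → G) (j : ι) {g : G → 𝕜}
    (hg : ∑ v, g v = 0) :
    ∑ v, hoeffdingWeight 𝕜 A τ j v * g v = if j ∈ A then g (τ j) else 0 := by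
  unfold hoeffdingWeight
  split_ifs
  · simp [sub_mul, sum_sub_distrib, ← mul_sum, hg, Pi.single_apply]
  · rw [← mul_sum, hg, mul_zero]

variable [Fintype ι] [AddGroup G] [CharZero 𝕜]

theorem sum_prod_hoeffdingWeight_mul_crossCorr {u : ι → G → 𝕜} (hu : ∀ j, ∑ t, u j t = 0)
    (A B : Finset ι) (τ : ι → G) :
    ∑ τ', (∏ j, hoeffdingWeight 𝕜 A τ j (τ' j)) * crossCorr u B τ' =
      if B = A then crossCorr u A τ else 0 := by
  have hfactor (t : G) (j : ι) :
      ∑ v, hoeffdingWeight 𝕜 A τ j v * (if j ∈ B then u j (t + v) else 1) =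
        if j ∈ B ↔ j ∈ A then (if j ∈ A then u j (t + τ j) else 1) else 0 := by
    have hshift : ∑ v, u j (t + v) = 0 := (Equiv.sum_comp (Equiv.addLeft t) (u j)).trans (hu j)
    by_cases hB : j ∈ B <;> by_cases hA : j ∈ A <;>
      simp [hA, hB, sum_hoeffdingWeight, sum_hoeffdingWeight_mul A τ j hshift]
  calc ∑ τ', (∏ j, hoeffdingWeight 𝕜 A τ j (τ' j)) * crossCorr u B τ'
      = ∑ t, ∑ τ' : ι → G, ∏ j,
          hoeffdingWeight 𝕜 A τ j (τ' j) * (if j ∈ B then u j (t + τ' j) else 1) := by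
        simp only [crossCorr, mul_sum, prod_mul_distrib, prod_ite_mem, univ_inter]
        exact sum_comm
    _ = ∑ t, ∏ j, ∑ v, hoeffdingWeight 𝕜 A τ j v * (if j ∈ B then u j (t + v) else 1) := by
        simp only [prod_univ_sum, Fintype.piFinset_univ]
    _ = ∑ t, if B = A then ∏ j ∈ A, u j (t + τ j) else 0 := by
        simp only [hfactor, prod_ite_zero, Finset.ext_iff, mem_univ, true_imp_iff, prod_ite_mem,
          univ_inter]
    _ = if B = A then crossCorr u A τ else 0 := by
        split_ifs <;> simp [crossCorr]

omit [DecidableEq ι] [DecidableEq G] in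
theorem mul_crossCorr_eq_zero_of_sum_eq_const {u : ι → G → 𝕜} (hu : ∀ j, ∑ t, u j t = 0)
    {c : Finset ι → 𝕜} {a : 𝕜} (hc : ∀ τ, ∑ B, c B * crossCorr u B τ = a)
    {A : Finset ι} (hA : A.Nonempty) (τ : ι → G) : c A * crossCorr u A τ = 0 := by
  classical
  calc c A * crossCorr u A τ
      = ∑ B, c B * ∑ τ', (∏ j, hoeffdingWeight 𝕜 A τ j (τ' j)) * crossCorr u B τ' := by
        simp [sum_prod_hoeffdingWeight_mul_crossCorr hu]
    _ = ∑ τ', (∏ j, hoeffdingWeight 𝕜 A τ j (τ' j)) * ∑ B, c B * crossCorr u B τ' := by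
        simp only [mul_sum, mul_left_comm (c _)]
        exact sum_comm
    _ = (∏ j, ∑ v, hoeffdingWeight 𝕜 A τ j v) * a := by
        simp only [hc, ← sum_mul, prod_univ_sum, Fintype.piFinset_univ]
    _ = 0 := by
        obtain ⟨j, hj⟩ := hA
        rw [prod_eq_zero (mem_univ j) (by simp [sum_hoeffdingWeight, hj]), zero_mul]

end CrossCorrelation

section BernoulliPGF

variable {ι 𝕜 : Type*} [CommRing 𝕜]

/-- The probability generating function `1 - p + p X` of a Bernoulli variable of mean `p`. The
product over a set of users is the generating function of the number of active users. -/
noncomputable def bernoulliPGF (p : 𝕜) : 𝕜[X] := C (1 - p) + C p * X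

theorem prod_bernoulliPGF_eq_X_pow (T : Finset ι) {x : ι → ℕ} (hx : ∀ j, x j = 0 ∨ x j = 1) :
    ∏ j ∈ T, bernoulliPGF (x j : 𝕜) = X ^ ∑ j ∈ T, x j := by
  rw [← prod_pow_eq_pow_sum]
  refine prod_congr rfl fun j _ ↦ ?_
  rcases hx j with h | h <;> simp [bernoulliPGF, h]

theorem bernoulliPGF_eq_add (p q : 𝕜) :
    bernoulliPGF p = C (p - q) * (X - 1) + bernoulliPGF q := by
  simp only [bernoulliPGF, C_sub, C_1]
  ring

/-- The sum of the coefficients of degree at most `k`: for a generating function, the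
probability that the variable is at most `k`. -/
noncomputable def cumCoeff (k : ℕ) : 𝕜[X] →ₗ[𝕜] 𝕜 := ∑ m ∈ range (k + 1), lcoeff 𝕜 m

theorem cumCoeff_apply (k : ℕ) (p : 𝕜[X]) : cumCoeff k p = ∑ m ∈ range (k + 1), p.coeff m := by
  simp [cumCoeff]

theorem cumCoeff_X_pow (k n : ℕ) : cumCoeff k (X ^ n : 𝕜[X]) = if n ≤ k then 1 else 0 := by
  simp [cumCoeff_apply, coeff_X_pow]

theorem cumCoeff_X_sub_one_mul (k : ℕ) (p : 𝕜[X]) : cumCoeff k ((X - 1) * p) = -p.coeff k := by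
  rw [cumCoeff_apply]
  induction k with
  | zero => simp [sub_mul]
  | succ k ih =>
    rw [sum_range_succ, ih]
    simp only [sub_mul, one_mul, coeff_sub, coeff_X_mul]
    ring

end BernoulliPGF

section Throughput

variable {ι 𝕜 : Type*} [DecidableEq ι] [CommRing 𝕜]

/-- The factor of user `j` in the generating function of the number of active users other than
`i`, restricted to the event that user `i` is active. -/
noncomputable def userFactor (i : ι) (p : ι → 𝕜) : ι → 𝕜[X] :=
  Function.update (fun j ↦ bernoulliPGF (p j)) i (C (p i))

variable (𝕜) in
/-- The slope of the affine map `p j ↦ userFactor i p j`. -/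
noncomputable def userSlope (i : ι) : ι → 𝕜[X] :=
  Function.update (fun _ ↦ X - 1) i 1

theorem userFactor_eq_add (i : ι) (p q : ι → 𝕜) (j : ι) :
    userFactor i p j = C (p j - q j) * userSlope 𝕜 i j + userFactor i q j := by
  rcases eq_or_ne j i with rfl | hj
  · simp [userFactor, userSlope]
  · simpa [userFactor, userSlope, hj] using bernoulliPGF_eq_add (p j) (q j)

variable [Fintype ι]

/-- The coefficient of `∏ j ∈ A, (x j - f j)` in the expansion around `f` of the probability that
user `i` is active together with at most `k` other users. -/
noncomputable def throughputCoeff (k : ℕ) (i : ι) (f : ι → 𝕜) (A : Finset ι) : 𝕜 :=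
  cumCoeff k ((∏ j ∈ A, userSlope 𝕜 i j) * ∏ j ∈ Aᶜ, userFactor i f j)

theorem prod_userFactor (i : ι) (p : ι → 𝕜) :
    ∏ j, userFactor i p j = C (p i) * ∏ j ∈ univ.erase i, bernoulliPGF (p j) := by
  rw [userFactor, prod_update_of_mem (mem_univ i), sdiff_singleton_eq_erase]

theorem cumCoeff_prod_userFactor_of_binary (k : ℕ) (i : ι) {x : ι → ℕ}
    (hx : ∀ j, x j = 0 ∨ x j = 1) :
    cumCoeff k (∏ j, userFactor i (fun j ↦ (x j : 𝕜)) j) =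
      if x i = 1 ∧ ∑ j ∈ univ.erase i, x j ≤ k then 1 else 0 := by
  rw [prod_userFactor, prod_bernoulliPGF_eq_X_pow _ hx, ← smul_eq_C_mul, map_smul, cumCoeff_X_pow]
  rcases hx i with h | h <;> simp [h]

theorem cumCoeff_prod_userFactor_eq_sum (k : ℕ) (i : ι) (p f : ι → 𝕜) :
    cumCoeff k (∏ j, userFactor i p j) =
      ∑ A, throughputCoeff k i f A * ∏ j ∈ A, (p j - f j) := by
  simp only [userFactor_eq_add i p f, prod_add, powerset_univ, map_sum]
  refine sum_congr rfl fun A _ ↦ ?_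
  rw [prod_mul_distrib, ← map_prod, mul_assoc, ← smul_eq_C_mul, map_smul, smul_eq_mul, mul_comm,
    throughputCoeff, compl_eq_univ_sdiff]

theorem throughputCoeff_of_mem (k : ℕ) {i : ι} (f : ι → 𝕜) {A : Finset ι} (hi : i ∈ A) {m : ℕ}
    (hA : #A = m + 2) :
    throughputCoeff k i f A = -((X - 1) ^ m * ∏ j ∈ Aᶜ, bernoulliPGF (f j)).coeff k := by
  rw [throughputCoeff, userSlope, userFactor, prod_update_of_mem hi,
    prod_update_of_notMem (by simpa using hi), one_mul, prod_const, sdiff_singleton_eq_erase,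
    card_erase_of_mem hi, hA, Nat.add_succ_sub_one, pow_succ', mul_assoc, cumCoeff_X_sub_one_mul]

theorem throughputCoeff_of_notMem (k : ℕ) {i : ι} (f : ι → 𝕜) {A : Finset ι} (hi : i ∉ A) {m : ℕ}
    (hA : #A = m + 1) :
    throughputCoeff k i f A =
      -(f i * ((X - 1) ^ m * ∏ j ∈ Aᶜ.erase i, bernoulliPGF (f j)).coeff k) := by
  rw [throughputCoeff, userSlope, userFactor, prod_update_of_notMem hi,
    prod_update_of_mem (by simpa using hi), prod_const, sdiff_singleton_eq_erase, hA, pow_succ',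
    mul_left_comm, ← smul_eq_C_mul, map_smul, mul_assoc, cumCoeff_X_sub_one_mul, smul_eq_mul,
    mul_neg]

end Throughput

section NonVanishing

variable {ι 𝕜 : Type*} [Field 𝕜]

theorem splits_X_sub_one_pow_mul_prod_bernoulliPGF (f : ι → 𝕜) (m : ℕ) (T : Finset ι) :
    ((X - 1) ^ m * ∏ j ∈ T, bernoulliPGF (f j)).Splits := by
  refine .mul (.pow (by simpa using Splits.X_sub_C (1 : 𝕜)) m) (.prod fun j _ ↦ ?_)
  refine .of_natDegree_le_one ?_
  rw [bernoulliPGF, add_comm]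
  exact natDegree_linear_le

theorem natDegree_X_sub_one_pow_mul_prod_bernoulliPGF {f : ι → 𝕜} (hf : ∀ j, f j ≠ 0) (m : ℕ)
    (T : Finset ι) : ((X - 1) ^ m * ∏ j ∈ T, bernoulliPGF (f j)).natDegree = m + #T := by
  have hfactor (j : ι) : (bernoulliPGF (f j)).natDegree = 1 := by
    rw [bernoulliPGF, add_comm, natDegree_linear (hf j)]
  have hne (j : ι) : bernoulliPGF (f j) ≠ 0 := ne_zero_of_natDegree_gt (n := 0) (by simp [hfactor])
  have hmonic : (X - 1 : 𝕜[X]).Monic := by simpa using monic_X_sub_C (1 : 𝕜)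
  have hX : (X - 1 : 𝕜[X]).natDegree = 1 := by simpa using natDegree_X_sub_C (1 : 𝕜)
  rw [(hmonic.pow m).natDegree_mul' (prod_ne_zero_iff.2 fun j _ ↦ hne j), natDegree_pow, hX,
    natDegree_prod _ _ fun j _ ↦ hne j]
  simp [hfactor]

theorem coeff_zero_X_sub_one_pow_mul_prod_bernoulliPGF_ne_zero {f : ι → 𝕜}
    (hf : ∀ j, f j ≠ 1) (m : ℕ) (T : Finset ι) :
    ((X - 1) ^ m * ∏ j ∈ T, bernoulliPGF (f j)).coeff 0 ≠ 0 := by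
  simp [coeff_zero_eq_eval_zero, eval_prod, bernoulliPGF, prod_ne_zero_iff, sub_ne_zero,
    fun j ↦ (hf j).symm]

theorem coeff_X_sub_one_pow_ne_zero [CharZero 𝕜] {k n : ℕ} (hk : k ≤ n) :
    ((X - 1) ^ n : 𝕜[X]).coeff k ≠ 0 := by
  rw [show (X - 1 : 𝕜[X]) = X + C (-1) by simp [sub_eq_add_neg], coeff_X_add_C_pow]
  exact mul_ne_zero (by simp) (Nat.cast_ne_zero.2 (Nat.choose_pos hk).ne')

variable {f : ι → ℝ}

theorem coeff_X_sub_one_mul_ne_zero_or_coeff_bernoulliPGF_mul_ne_zero {q : ℝ[X]}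
    (hq : q.Splits) (h₀ : q.coeff 0 ≠ 0) (p : ℝ) {k : ℕ} (hk : k ≤ q.natDegree + 1) :
    ((X - 1) * q).coeff k ≠ 0 ∨ (bernoulliPGF p * q).coeff k ≠ 0 := by
  by_contra! ⟨hsub, hadd⟩
  rcases k with _ | m
  · simp [sub_mul, h₀] at hsub
  · simp only [bernoulliPGF, sub_mul, add_mul, one_mul, mul_assoc, coeff_sub, coeff_add,
      coeff_C_mul, coeff_X_mul] at hsub hadd
    have hm : q.coeff m = 0 := by linear_combination hadd + (1 - p) * hsub
    have hm' : q.coeff (m + 1) = 0 := by linear_combination hm - hsub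
    exact h₀ (coeff_eq_zero_of_consecutive_coeff_eq_zero hq (by omega) hm hm' 0 m.zero_le)

theorem exists_throughputCoeff_ne_zero [Fintype ι] [DecidableEq ι] (hf₀ : ∀ j, f j ≠ 0)
    (hf₁ : ∀ j, f j ≠ 1) {k : ℕ} (hk : k + 2 ≤ Fintype.card ι) {A : Finset ι} (hA : 2 ≤ #A) :
    ∃ i, throughputCoeff k i f A ≠ 0 := by
  obtain ⟨m, hm⟩ := Nat.exists_eq_add_of_le' hA
  obtain ⟨i, hi⟩ : A.Nonempty := card_pos.1 (by omega)
  by_cases hfull : Aᶜ = ∅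
  · rw [compl_eq_empty_iff] at hfull
    rw [hfull, card_univ] at hm
    refine ⟨i, ?_⟩
    rw [throughputCoeff_of_mem k f hi (by rw [hfull, card_univ, hm]), hfull]
    simpa using coeff_X_sub_one_pow_ne_zero (by omega)
  · obtain ⟨l, hl⟩ := nonempty_iff_ne_empty.2 hfull
    have hdeg := natDegree_X_sub_one_pow_mul_prod_bernoulliPGF hf₀ m (Aᶜ.erase l)
    have hcard : #(Aᶜ.erase l) + 1 + #A = Fintype.card ι := by
      rw [card_erase_add_one hl, add_comm, card_add_card_compl]
    rcases coeff_X_sub_one_mul_ne_zero_or_coeff_bernoulliPGF_mul_ne_zero (k := k)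
      (splits_X_sub_one_pow_mul_prod_bernoulliPGF f m (Aᶜ.erase l))
      (coeff_zero_X_sub_one_pow_mul_prod_bernoulliPGF_ne_zero hf₁ m _) (f l) (by omega) with h | h
    · refine ⟨l, ?_⟩
      rw [throughputCoeff_of_notMem k f (mem_compl.1 hl) hm, pow_succ', mul_assoc]
      exact neg_ne_zero.2 (mul_ne_zero (hf₀ l) h)
    · refine ⟨i, ?_⟩
      rw [throughputCoeff_of_mem k f hi hm, ← mul_prod_erase _ _ hl, mul_left_comm]
      exact neg_ne_zero.2 h

theorem crossCorr_eq_zero_of_sum_throughputCoeff_eq_const {G : Type*} [Fintype G] [AddGroup G]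
    [Fintype ι] [DecidableEq ι] (hf₀ : ∀ j, f j ≠ 0) (hf₁ : ∀ j, f j ≠ 1) {k : ℕ}
    (hk : k + 2 ≤ Fintype.card ι) {u : ι → G → ℝ} (hu : ∀ j, ∑ t, u j t = 0) {a : ι → ℝ}
    (ha : ∀ i τ, ∑ A, throughputCoeff k i f A * crossCorr u A τ = a i) {A : Finset ι}
    (hA : A.Nonempty) (τ : ι → G) : crossCorr u A τ = 0 := by
  rcases (Nat.succ_le_iff.2 hA.card_pos).eq_or_lt with h | h
  · obtain ⟨j, rfl⟩ := card_eq_one.1 h.symm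
    simpa [crossCorr] using (Equiv.sum_comp (Equiv.addRight (τ j)) (u j)).trans (hu j)
  · obtain ⟨i, hi⟩ := exists_throughputCoeff_ne_zero hf₀ hf₁ hk h
    exact (mul_eq_zero.1 (mul_crossCorr_eq_zero_of_sum_eq_const hu (ha i) hA τ)).resolve_left hi

end NonVanishing

section ProtocolSequences

variable {K L : ℕ} [NeZero L] {s : Fin K → ZMod L → ℕ}

theorem rcount_eq_of_isTI {γ : ℕ} (hTI : IsTI s γ) (i : Fin K) (τ τ' : Fin K → ZMod L) :
    Rcount s γ i τ = Rcount s γ i τ' := by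
  have hL : (L : ℚ) ≠ 0 := Nat.cast_ne_zero.2 (NeZero.ne L)
  exact_mod_cast (div_left_inj' hL).1 (hTI i τ τ')

theorem rcount_eq_sum_throughputCoeff_mul_crossCorr (hbin : ∀ i t, s i t = 0 ∨ s i t = 1) (k : ℕ)
    (i : Fin K) (f : Fin K → ℝ) (τ : Fin K → ZMod L) :
    (Rcount s (k + 1) i τ : ℝ) =
      ∑ A, throughputCoeff k i f A * crossCorr (fun j t ↦ (s j t : ℝ) - f j) A τ := by
  calc (Rcount s (k + 1) i τ : ℝ)
      = ∑ t, cumCoeff k (∏ j, userFactor i (fun j ↦ (s j (t + τ j) : ℝ)) j) := by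
        simp only [Rcount, cumCoeff_prod_userFactor_of_binary k i fun j ↦ hbin j _, card_filter,
          Nat.add_sub_cancel]
        push_cast
        rfl
    _ = ∑ A, throughputCoeff k i f A * crossCorr (fun j t ↦ (s j t : ℝ) - f j) A τ := by
        simp only [cumCoeff_prod_userFactor_eq_sum k i _ f, crossCorr, mul_sum]
        exact sum_comm

theorem sum_sub_duty (s : ZMod L → ℕ) : ∑ t, ((s t : ℝ) - (duty s : ℝ)) = 0 := by
  have hL : (L : ℝ) ≠ 0 := Nat.cast_ne_zero.2 (NeZero.ne L)
  simp [duty, sum_sub_distrib, ZMod.card, mul_div_cancel₀, hL]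

theorem isSI_of_crossCorr_centered_eq_zero {f : Fin K → ℝ}
    (h : ∀ A : Finset (Fin K), A.Nonempty →
      ∀ τ, crossCorr (fun j t ↦ (s j t : ℝ) - f j) A τ = 0) : IsSI s := by
  have hHcorr (A : Finset (Fin K)) (τ : Fin K → ZMod L) :
      (Hcorr s A τ : ℝ) = L * ∏ j ∈ A, f j := by
    simpa [crossCorr, Hcorr, ZMod.card] using crossCorr_eq_of_centered h A τ
  intro A _ τ τ'
  exact_mod_cast (hHcorr A τ).trans (hHcorr A τ').symm

end ProtocolSequences

theorem stmt19_general {K L γ : ℕ} [NeZero L] (hγ : 1 ≤ γ) (hγK : γ < K)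
    (s : Fin K → ZMod L → ℕ) (hbin : ∀ i t, s i t = 0 ∨ s i t = 1)
    (hpos : ∀ i, 0 < duty (s i)) (hlt : ∀ i, duty (s i) < 1) (hTI : IsTI s γ) :
    IsSI s := by
  obtain ⟨k, rfl⟩ := Nat.exists_eq_add_of_le' hγ
  refine isSI_of_crossCorr_centered_eq_zero (f := fun i ↦ duty (s i)) fun A hA τ ↦ ?_
  refine crossCorr_eq_zero_of_sum_throughputCoeff_eq_const (k := k) (f := fun i ↦ (duty (s i) : ℝ))
    (a := fun i ↦ Rcount s (k + 1) i 0) (fun i ↦ mod_cast (hpos i).ne')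
    (fun i ↦ mod_cast (hlt i).ne) ((Nat.succ_le_of_lt hγK).trans_eq (Fintype.card_fin K).symm)
    (fun i ↦ sum_sub_duty (s i)) (fun i τ' ↦ ?_) hA τ
  rw [← rcount_eq_sum_throughputCoeff_mul_crossCorr hbin, rcount_eq_of_isTI hTI i τ' 0]

theorem stmt19 (K L : ℕ) (hK : 5 ≤ K) (hL : 1 ≤ L) [NeZero L]
    (s : Fin K → ZMod L → ℕ) (hbin : ∀ i t, s i t = 0 ∨ s i t = 1)
    (n d : ℕ) (hn : 0 < n) (hd : 0 < d) (hcop : Nat.Coprime n d)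
    (hf0 : 0 < (n : ℚ) / (d : ℚ)) (hf1 : (n : ℚ) / (d : ℚ) < 1)
    (hduty : ∀ i, duty (s i) = (n : ℚ) / (d : ℚ))
    (hTI : IsTI s (K - 3))
    (hR : ∀ (i : Fin K) (τ : Fin K → ZMod L), 0 < R s (K - 3) i τ)
    (hprime : Nat.Prime (K - 3)) (heven : Even (K - 2))
    (hgcd : Nat.gcd ((K - 2) / 2) d = 1) :
    IsSI s := by
  exact stmt19_general (by omega) (by omega) s hbin (fun i ↦ hduty i ▸ hf0) (fun i ↦ hduty i ▸ hf1)
    hTI
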